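/- The function T satisfies the equation a ΔT + ∇a · ∇T = 0 on U; that is, a(∂₁₁T + ∂₂₂T) + (∂₁a)(∂₁T) + (∂₂a)(∂₂T) = 0 at every point of U. -/

import Mathlib

/-- Partial derivative in direction `i` of a function on `ℝ²`. -/
noncomputable def pd (i : Fin 2) (f : EuclideanSpace ℝ (Fin 2) → ℝ)
    (x : EuclideanSpace ℝ (Fin 2)) : ℝ :=
  fderiv ℝ f x (EuclideanSpace.single i 1)


lemma pd_smooth {U : Set (EuclideanSpace ℝ (Fin 2))} (hU : IsOpen U)
    {f : EuclideanSpace ℝ (Fin 2) → ℝ} (hf : ContDiffOn ℝ (⊤ : ℕ∞) f U) (i : Fin 2) :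
    ContDiffOn ℝ (⊤ : ℕ∞) (pd i f) U := by
  have h := hf.fderiv_of_isOpen (m := (⊤ : ℕ∞)) hU (by simp)
  exact h.clm_apply contDiffOn_const

lemma diffAt {U : Set (EuclideanSpace ℝ (Fin 2))} (hU : IsOpen U)
    {f : EuclideanSpace ℝ (Fin 2) → ℝ} (hf : ContDiffOn ℝ (⊤ : ℕ∞) f U)
    {x : EuclideanSpace ℝ (Fin 2)} (hx : x ∈ U) : DifferentiableAt ℝ f x :=
  (hf.contDiffAt (hU.mem_nhds hx)).differentiableAt (by simp)

lemma pd_comm {U : Set (EuclideanSpace ℝ (Fin 2))} (hU : IsOpen U)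
    {f : EuclideanSpace ℝ (Fin 2) → ℝ} (hf : ContDiffOn ℝ (⊤ : ℕ∞) f U)
    {x : EuclideanSpace ℝ (Fin 2)} (hx : x ∈ U) (i j : Fin 2) :
    pd i (pd j f) x = pd j (pd i f) x := by
  have hs : IsSymmSndFDerivAt ℝ f x :=
    (hf.contDiffAt (hU.mem_nhds hx)).isSymmSndFDerivAt (by simp; exact WithTop.coe_le_coe.2 (le_top : (2 : ℕ∞) ≤ ⊤))
  have hd : DifferentiableAt ℝ (fderiv ℝ f) x :=
    ((hf.fderiv_of_isOpen (m := (⊤ : ℕ∞)) hU (by simp)).contDiffAt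
      (hU.mem_nhds hx)).differentiableAt (by simp)
  have key : ∀ i j : Fin 2, pd i (pd j f) x = fderiv ℝ (fderiv ℝ f) x
      (EuclideanSpace.single i 1) (EuclideanSpace.single j 1) := by
    intro i j
    have := (hd.hasFDerivAt.clm_apply
      (hasFDerivAt_const (EuclideanSpace.single j (1:ℝ)) x)).fderiv
    change fderiv ℝ (fun y => fderiv ℝ f y (EuclideanSpace.single j 1)) x _ = _
    rw [this]
    simp
  rw [key, key]
  exact hs _ _

lemma pd_congr {U : Set (EuclideanSpace ℝ (Fin 2))} (hU : IsOpen U)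
    {f g : EuclideanSpace ℝ (Fin 2) → ℝ} (h : ∀ x ∈ U, f x = g x)
    {x : EuclideanSpace ℝ (Fin 2)} (hx : x ∈ U) (i : Fin 2) : pd i f x = pd i g x := by
  have : f =ᶠ[nhds x] g := Filter.eventually_of_mem (hU.mem_nhds hx) h
  unfold pd
  rw [this.fderiv_eq]

lemma pd_add {f g : EuclideanSpace ℝ (Fin 2) → ℝ} {x : EuclideanSpace ℝ (Fin 2)}
    (hf : DifferentiableAt ℝ f x) (hg : DifferentiableAt ℝ g x) (i : Fin 2) :
    pd i (fun y => f y + g y) x = pd i f x + pd i g x := by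
  unfold pd
  rw [fderiv_fun_add hf hg]; rfl

lemma pd_mul {f g : EuclideanSpace ℝ (Fin 2) → ℝ} {x : EuclideanSpace ℝ (Fin 2)}
    (hf : DifferentiableAt ℝ f x) (hg : DifferentiableAt ℝ g x) (i : Fin 2) :
    pd i (fun y => f y * g y) x = f x * pd i g x + g x * pd i f x := by
  unfold pd
  rw [fderiv_fun_mul hf hg]; simp

lemma pd_zero (x : EuclideanSpace ℝ (Fin 2)) (i : Fin 2) : pd i (fun _ => 0) x = 0 := by
  simp [pd]

lemma diff_coord (x : EuclideanSpace ℝ (Fin 2)) (j : Fin 2) :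
    DifferentiableAt ℝ (fun y : EuclideanSpace ℝ (Fin 2) => y j) x := by fun_prop

lemma pd_coord (x : EuclideanSpace ℝ (Fin 2)) (i j : Fin 2) :
    pd i (fun y => y j) x = if j = i then 1 else 0 := by
  have := (EuclideanSpace.proj (𝕜 := ℝ) (ι := Fin 2) j).fderiv (x := x)
  change fderiv ℝ (EuclideanSpace.proj (𝕜 := ℝ) (ι := Fin 2) j) x _ = _
  rw [this]
  simp [Pi.single_apply]

lemma pd_neg_coord (x : EuclideanSpace ℝ (Fin 2)) (i j : Fin 2) :
    pd i (fun y => -(y j)) x = -(if j = i then 1 else 0) := by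
  rw [← pd_coord x i j]
  unfold pd
  rw [fderiv_fun_neg]; rfl

/-- derivative of a rotation-type expression -/
lemma pd_rot {p q : EuclideanSpace ℝ (Fin 2) → ℝ} {x : EuclideanSpace ℝ (Fin 2)}
    (hp : DifferentiableAt ℝ p x) (hq : DifferentiableAt ℝ q x) (i : Fin 2) :
    pd i (fun y => -(y 1) * p y + y 0 * q y) x
      = -(x 1) * pd i p x - (if (1 : Fin 2) = i then 1 else 0) * p x
        + x 0 * pd i q x + (if (0 : Fin 2) = i then 1 else 0) * q x := by
  have h1 : DifferentiableAt ℝ (fun y : EuclideanSpace ℝ (Fin 2) => -(y 1)) x :=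
    (diff_coord x 1).fun_neg
  rw [pd_add (h1.fun_mul hp) ((diff_coord x 0).fun_mul hq), pd_mul h1 hp,
    pd_mul (diff_coord x 0) hq, pd_coord, pd_neg_coord]
  ring


/-- Lemma 3.1 (first part): the tangential quantity `T = -x₂ u₁ + x₁ u₂` satisfies
`a ΔT + ∇a · ∇T = 0` on `U`. -/
theorem stmt2 (U : Set (EuclideanSpace ℝ (Fin 2))) (hU : IsOpen U)
    (a u : EuclideanSpace ℝ (Fin 2) → ℝ)
    (ha : ContDiffOn ℝ (⊤ : ℕ∞) a U) (hapos : ∀ x ∈ U, 0 < a x)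
    (hrad : ∀ x ∈ U, -(x 1) * pd 0 a x + x 0 * pd 1 a x = 0)
    (hu : ContDiffOn ℝ (⊤ : ℕ∞) u U)
    (heq : ∀ x ∈ U, a x * (pd 0 (pd 0 u) x + pd 1 (pd 1 u) x)
      + (pd 0 a x * pd 0 u x + pd 1 a x * pd 1 u x) = 0)
    (T : EuclideanSpace ℝ (Fin 2) → ℝ)
    (hT : ∀ x, T x = -(x 1) * pd 0 u x + x 0 * pd 1 u x) :
    ∀ x ∈ U, a x * (pd 0 (pd 0 T) x + pd 1 (pd 1 T) x)
      + (pd 0 a x * pd 0 T x + pd 1 a x * pd 1 T x) = 0 := by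
  have hui := fun i => pd_smooth hU hu i
  have huij := fun i j => pd_smooth hU (hui j) i
  have hai := fun i => pd_smooth hU ha i
  have hTi : ∀ i, ∀ x ∈ U, pd i T x = -(x 1) * pd i (pd 0 u) x
      - (if (1 : Fin 2) = i then 1 else 0) * pd 0 u x
        + x 0 * pd i (pd 1 u) x + (if (0 : Fin 2) = i then 1 else 0) * pd 1 u x := by
    intro i x hx
    rw [pd_congr hU (fun y _ => hT y) hx, pd_rot (diffAt hU (hui 0) hx) (diffAt hU (hui 1) hx)]
  intro x hx
  have dU := fun i => diffAt hU (hui i) hx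
  have dUU := fun i j => diffAt hU (huij i j) hx
  have dA := fun i => diffAt hU (hai i) hx
  have da := diffAt hU ha hx
  have hR : ∀ i, -(x 1) * pd i (pd 0 a) x
      - (if (1 : Fin 2) = i then 1 else 0) * pd 0 a x
        + x 0 * pd i (pd 1 a) x + (if (0 : Fin 2) = i then 1 else 0) * pd 1 a x = 0 := by
    intro i
    rw [← pd_rot (dA 0) (dA 1), pd_congr hU hrad hx, pd_zero]
  have hE : ∀ i, a x * (pd i (pd 0 (pd 0 u)) x + pd i (pd 1 (pd 1 u)) x)
      + (pd 0 (pd 0 u) x + pd 1 (pd 1 u) x) * pd i a x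
      + (pd 0 a x * pd i (pd 0 u) x + pd 0 u x * pd i (pd 0 a) x
        + (pd 1 a x * pd i (pd 1 u) x + pd 1 u x * pd i (pd 1 a) x)) = 0 := by
    intro i
    have h := pd_congr hU heq hx i
    rw [pd_zero, pd_add (da.fun_mul ((dUU 0 0).fun_add (dUU 1 1)))
      (((dA 0).fun_mul (dU 0)).fun_add ((dA 1).fun_mul (dU 1))),
      pd_mul da ((dUU 0 0).fun_add (dUU 1 1)), pd_add (dUU 0 0) (dUU 1 1),
      pd_add ((dA 0).fun_mul (dU 0)) ((dA 1).fun_mul (dU 1)),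
      pd_mul (dA 0) (dU 0), pd_mul (dA 1) (dU 1)] at h
    exact h
  -- second derivatives of T
  have hT00 : pd 0 (pd 0 T) x = -(x 1) * pd 0 (pd 0 (pd 0 u)) x
      + x 0 * pd 0 (pd 0 (pd 1 u)) x + pd 0 (pd 1 u) x + pd 0 (pd 1 u) x := by
    have h0 : ∀ y ∈ U, pd 0 T y = (-(y 1) * pd 0 (pd 0 u) y + y 0 * pd 0 (pd 1 u) y)
        + pd 1 u y := by
      intro y hy; rw [hTi 0 y hy]; simp
    have h1 : DifferentiableAt ℝ (fun y : EuclideanSpace ℝ (Fin 2) =>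
        -(y 1) * pd 0 (pd 0 u) y + y 0 * pd 0 (pd 1 u) y) x :=
      (((diff_coord x 1).fun_neg).fun_mul (dUU 0 0)).fun_add ((diff_coord x 0).fun_mul (dUU 0 1))
    rw [pd_congr hU h0 hx, pd_add h1 (dU 1), pd_rot (dUU 0 0) (dUU 0 1)]
    simp
  have hT11 : pd 1 (pd 1 T) x = -(x 1) * pd 1 (pd 1 (pd 0 u)) x
      + x 0 * pd 1 (pd 1 (pd 1 u)) x - pd 1 (pd 0 u) x - pd 1 (pd 0 u) x := by
    have h0 : ∀ y ∈ U, pd 1 T y + pd 0 u y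
        = (-(y 1) * pd 1 (pd 0 u) y + y 0 * pd 1 (pd 1 u) y) := by
      intro y hy; rw [hTi 1 y hy]; simp; ring
    have hTs : ContDiffOn ℝ (⊤ : ℕ∞) T U := by
      have : T = fun x => -(x 1) * pd 0 u x + x 0 * pd 1 u x := funext hT
      rw [this]
      have c : ∀ j : Fin 2, ContDiffOn ℝ (⊤ : ℕ∞)
        (fun y : EuclideanSpace ℝ (Fin 2) => y j) U := fun j => by fun_prop
      exact ((c 1).neg.mul (hui 0)).add ((c 0).mul (hui 1))
    have h2 := pd_congr hU h0 hx 1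
    rw [pd_add (diffAt hU (pd_smooth hU hTs 1) hx) (dU 0), pd_rot (dUU 1 0) (dUU 1 1)] at h2
    simp at h2
    linarith
  have c01 := pd_comm hU hu hx 1 0
  have c001 : pd 0 (pd 0 (pd 1 u)) x = pd 1 (pd 0 (pd 0 u)) x := by
    rw [pd_congr hU (fun y hy => pd_comm hU hu hy 0 1) hx, pd_comm hU (hui 0) hx]
  have c110 : pd 1 (pd 1 (pd 0 u)) x = pd 0 (pd 1 (pd 1 u)) x := by
    rw [pd_congr hU (fun y hy => pd_comm hU hu hy 1 0) hx, pd_comm hU (hui 1) hx]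
  have ca := pd_comm hU ha hx 1 0
  have E0 := hE 0
  have E1 := hE 1
  have R0 := hR 0
  have R1 := hR 1
  have T0 := hTi 0 x hx
  have T1 := hTi 1 x hx
  have R := hrad x hx
  simp at R0 R1 T0 T1
  rw [hT00, hT11, T0, T1, c001, c110]
  rw [c01] at *
  rw [ca] at *
  linear_combination (-(x 1)) * E0 + x 0 * E1 - pd 0 u x * R0 - pd 1 u x * R1
    - (pd 0 (pd 0 u) x + pd 1 (pd 1 u) x) * R
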